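/- arXiv:1106.1189 — 3 statements merged into one kernel-verified Lean document; each statement's English description precedes it below -/
import Mathlib

section
/- Let k > 5 be an integer and define q_k : ℝ → ℝ by q_k(θ) = 2 cos((k−2)θ) + (4/π) sin((k−1)θ) + (8(1−2^{3−2k})/(π²(1−2^{2−2k}))) ∑_{m=0}^{k−4} cos((k−4−2m)θ), where the sum ∑_{m=0}^{k−4} cos((k−4−2m)θ) is the continuous extension of sin((k−3)θ)/sin θ. Then q_k is an alternating function of order 2k−2 on (−π, π) with oscillation distance 0.03; that is, there exist points −π < p_1 < p_2 < … < p_{2k−1} < π such that |q_k(p_i)| > 0.03 for each i and q_k(p_i)·q_k(p_{i+1}) < 0 for each i ∈ {1,…,2k−2}. -/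
/-- The trigonometric polynomial
`q_k(θ) = 2 cos((k−2)θ) + (4/π) sin((k−1)θ)
+ (8(1−2^{3−2k})/(π²(1−2^{2−2k}))) ∑_{m=0}^{k−4} cos((k−4−2m)θ)`,
where the last sum is the continuous extension of `sin((k−3)θ)/sin θ`. -/
noncomputable def qfun (k : ℕ) (θ : ℝ) : ℝ :=
  2 * Real.cos (((k : ℝ) - 2) * θ) + 4 / Real.pi * Real.sin (((k : ℝ) - 1) * θ)
  + 8 * (1 - (2 : ℝ) ^ (3 - 2 * (k : ℤ))) / (Real.pi ^ 2 * (1 - (2 : ℝ) ^ (2 - 2 * (k : ℤ)))) *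
      ∑ m ∈ Finset.range (k - 3), Real.cos (((k : ℝ) - 4 - 2 * m) * θ)

theorem aux_sum (a θ : ℝ) (n : ℕ) :
    2 * Real.sin θ * ∑ m ∈ Finset.range n, Real.cos ((a - 2 * m) * θ)
      = Real.sin ((a + 1) * θ) - Real.sin ((a + 1 - 2 * n) * θ) := by
  induction n with
  | zero => simp
  | succ n ih =>
    rw [Finset.sum_range_succ, mul_add, ih]
    have h1 : (a + 1 - 2 * (n : ℝ)) * θ = (a - 2 * n) * θ + θ := by ring
    have h2 : (a + 1 - 2 * ((n + 1 : ℕ) : ℝ)) * θ = (a - 2 * n) * θ - θ := by push_cast; ring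
    rw [h1, h2, Real.sin_add, Real.sin_sub]
    ring

theorem aux_sum2 (k : ℕ) (hk : 5 < k) (θ : ℝ) :
    Real.sin θ * ∑ m ∈ Finset.range (k - 3), Real.cos (((k : ℝ) - 4 - 2 * m) * θ)
      = Real.sin (((k : ℝ) - 3) * θ) := by
  have h := aux_sum ((k : ℝ) - 4) θ (k - 3)
  rw [Nat.cast_sub (by omega : 3 ≤ k)] at h
  have h2 : ((k : ℝ) - 4 + 1 - 2 * ((k : ℝ) - (3 : ℕ))) * θ = -(((k : ℝ) - 3) * θ) := by
    push_cast; ring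
  have h1 : ((k : ℝ) - 4 + 1) * θ = ((k : ℝ) - 3) * θ := by ring
  rw [h2, Real.sin_neg, h1] at h
  linarith

theorem aux_u : 1.2732 ≤ 4 / Real.pi ∧ 4 / Real.pi ≤ 1.2733 := by
  have h1 := Real.pi_gt_d6
  have h2 := Real.pi_lt_d6
  constructor
  · rw [le_div_iff₀ (by linarith)]; linarith
  · rw [div_le_iff₀ (by linarith)]; linarith

theorem aux_c (k : ℕ) (hk : 5 < k) :
    0.8097 ≤ 8 * (1 - (2 : ℝ) ^ (3 - 2 * (k : ℤ))) / (Real.pi ^ 2 * (1 - (2 : ℝ) ^ (2 - 2 * (k : ℤ))))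
    ∧ 8 * (1 - (2 : ℝ) ^ (3 - 2 * (k : ℤ))) / (Real.pi ^ 2 * (1 - (2 : ℝ) ^ (2 - 2 * (k : ℤ))))
      ≤ 0.8106 := by
  have h1 := Real.pi_gt_d6
  have h2 := Real.pi_lt_d6
  have e1 : (2 : ℝ) ^ (3 - 2 * (k : ℤ)) = 2 * (2 : ℝ) ^ (2 - 2 * (k : ℤ)) := by
    rw [show (3 - 2 * (k : ℤ)) = 1 + (2 - 2 * (k : ℤ)) by ring, zpow_add₀ (by norm_num), zpow_one]
  have e2 : (0 : ℝ) < (2 : ℝ) ^ (2 - 2 * (k : ℤ)) := by positivity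
  have e3 : (2 : ℝ) ^ (2 - 2 * (k : ℤ)) ≤ 1 / 1024 := by
    have : (2 : ℝ) ^ (2 - 2 * (k : ℤ)) ≤ (2 : ℝ) ^ (-10 : ℤ) :=
      zpow_le_zpow_right₀ (by norm_num) (by omega)
    refine this.trans (by norm_num)
  rw [e1]
  generalize (2 : ℝ) ^ (2 - 2 * (k : ℤ)) = e at *
  have p1 : 9.8696 ≤ Real.pi ^ 2 := by nlinarith
  have p2 : Real.pi ^ 2 ≤ 9.86961 := by nlinarith
  have p3 : 0 < Real.pi ^ 2 * (1 - e) := mul_pos (by linarith) (by linarith)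
  constructor
  · rw [le_div_iff₀ p3]
    nlinarith [mul_le_mul_of_nonneg_right p2 (by linarith : 0 ≤ 1 - e)]
  · rw [div_le_iff₀ p3]
    nlinarith [mul_le_mul_of_nonneg_right p1 (by linarith : 0 ≤ 1 - e)]

theorem aux_poly (s : ℝ) (h0 : 0 < s) (h1 : s ≤ 1) :
    0 < 0.809 - 1.3034 * s - 0.48 * s ^ 2 + 2.5464 * s ^ 3 - 1.52 * s ^ 4 := by
  nlinarith [mul_nonneg h0.le (sub_nonneg.2 h1), mul_nonneg (mul_nonneg h0.le (sub_nonneg.2 h1)) (sq_nonneg (s - 0.6)), sq_nonneg (s - 0.6), sq_nonneg (s^2 - 0.6), sq_nonneg (s*(s - 0.6)), mul_nonneg (sub_nonneg.2 h1) (sq_nonneg (s - 0.6)), mul_nonneg h0.le (sq_nonneg (s - 0.6))]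

theorem aux_cos (j : ℕ) (x : ℝ) :
    Real.cos (((j : ℝ) + 1 / 2) * Real.pi - x) = (-1) ^ j * Real.sin x := by
  have : ((j : ℝ) + 1 / 2) * Real.pi - x = (Real.pi / 2 - x) + j * Real.pi := by ring
  rw [this, Real.cos_add_nat_mul_pi, Real.cos_pi_div_two_sub]

theorem aux_sin (j : ℕ) (x : ℝ) :
    Real.sin (((j : ℝ) + 1 / 2) * Real.pi - x) = (-1) ^ j * Real.cos x := by
  have : ((j : ℝ) + 1 / 2) * Real.pi - x = (Real.pi / 2 - x) + j * Real.pi := by ring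
  rw [this, Real.sin_add_nat_mul_pi, Real.sin_pi_div_two_sub]

theorem aux_sq (j : ℕ) : ((-1 : ℝ) ^ j) * (-1) ^ j = 1 := by
  rw [← mul_pow]; norm_num

theorem aux_pos (k : ℕ) (hk : 5 < k) (j : ℕ) (t : ℝ) (ht0 : 0 < t) (ht1 : t < Real.pi)
    (ht : ((k : ℝ) - 1) * t = ((j : ℝ) + 1 / 2) * Real.pi) :
    0.03 < (-1) ^ j * qfun k t := by
  have hs := aux_sum2 k hk t
  have hsin := Real.sin_pos_of_pos_of_lt_pi ht0 ht1
  have hsin1 := Real.sin_le_one t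
  obtain ⟨u1, u2⟩ := aux_u
  obtain ⟨c1, c2⟩ := aux_c k hk
  unfold qfun
  generalize ∑ m ∈ Finset.range (k - 3), Real.cos (((k : ℝ) - 4 - 2 * m) * t) = S at *
  generalize 8 * (1 - (2 : ℝ) ^ (3 - 2 * (k : ℤ))) / (Real.pi ^ 2 * (1 - (2 : ℝ) ^ (2 - 2 * (k : ℤ)))) = c at *
  generalize 4 / Real.pi = u at *
  have a1 : ((k : ℝ) - 2) * t = ((j : ℝ) + 1 / 2) * Real.pi - t := by rw [← ht]; ring
  have a2 : ((k : ℝ) - 1) * t = ((j : ℝ) + 1 / 2) * Real.pi - 0 := by rw [← ht]; ring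
  have a3 : ((k : ℝ) - 3) * t = ((j : ℝ) + 1 / 2) * Real.pi - 2 * t := by rw [← ht]; ring
  rw [a3, aux_sin, Real.cos_two_mul, Real.cos_sq'] at hs
  rw [a1, a2, aux_sin, aux_cos, Real.cos_zero]
  have hj := aux_sq j
  generalize (-1 : ℝ) ^ j = ε at *
  generalize Real.sin t = s at *
  have key : s * (ε * (2 * (ε * s) + u * (ε * 1) + c * S)) = 2 * s ^ 2 + u * s + c * (1 - 2 * s ^ 2) := by
    linear_combination (2 * s ^ 2 + u * s + c * (1 - 2 * s ^ 2)) * hj + ε * c * hs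
  refine lt_of_mul_lt_mul_left ?_ hsin.le
  rw [key]
  nlinarith [mul_pos hsin hsin]

theorem aux_neg (k : ℕ) (hk : 5 < k) (j : ℕ) (t : ℝ) (ht0 : 0 < t) (ht1 : t < Real.pi)
    (ht : ((k : ℝ) + 1) * t = ((j : ℝ) + 1 / 2) * Real.pi) :
    0.03 < (-1) ^ j * qfun k (-t) := by
  have hs := aux_sum2 k hk t
  have hsin := Real.sin_pos_of_pos_of_lt_pi ht0 ht1
  have hsin1 := Real.sin_le_one t
  obtain ⟨u1, u2⟩ := aux_u
  obtain ⟨c1, c2⟩ := aux_c k hk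
  unfold qfun
  simp only [mul_neg, Real.cos_neg, Real.sin_neg]
  generalize ∑ m ∈ Finset.range (k - 3), Real.cos (((k : ℝ) - 4 - 2 * m) * t) = S at *
  generalize 8 * (1 - (2 : ℝ) ^ (3 - 2 * (k : ℤ))) / (Real.pi ^ 2 * (1 - (2 : ℝ) ^ (2 - 2 * (k : ℤ)))) = c at *
  generalize 4 / Real.pi = u at *
  have a1 : ((k : ℝ) - 2) * t = ((j : ℝ) + 1 / 2) * Real.pi - 3 * t := by rw [← ht]; ring
  have a2 : ((k : ℝ) - 1) * t = ((j : ℝ) + 1 / 2) * Real.pi - 2 * t := by rw [← ht]; ring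
  have a3 : ((k : ℝ) - 3) * t = ((j : ℝ) + 1 / 2) * Real.pi - 2 * (2 * t) := by rw [← ht]; ring
  rw [a3, aux_sin, Real.cos_two_mul, Real.cos_two_mul, Real.cos_sq'] at hs
  rw [a1, a2, aux_sin, aux_cos, Real.sin_three_mul, Real.cos_two_mul, Real.cos_sq']
  have hj := aux_sq j
  generalize (-1 : ℝ) ^ j = ε at *
  generalize Real.sin t = s at *
  have key : s * (ε * (2 * (ε * (3 * s - 4 * s ^ 3)) + -(u * (ε * (2 * (1 - s ^ 2) - 1))) + c * S))
      = 6 * s ^ 2 - 8 * s ^ 4 - u * (s - 2 * s ^ 3) + c * (1 - 8 * s ^ 2 + 8 * s ^ 4) := by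
    linear_combination (6 * s ^ 2 - 8 * s ^ 4 - u * (s - 2 * s ^ 3) + c * (1 - 8 * s ^ 2 + 8 * s ^ 4)) * hj + ε * c * hs
  refine lt_of_mul_lt_mul_left ?_ hsin.le
  rw [key]
  have hp := aux_poly s hsin hsin1
  have s2 : s ^ 2 ≤ 1 := by nlinarith
  have s20 : 0 < s ^ 2 := by positivity
  have b1 : |1 - 8 * s ^ 2 + 8 * s ^ 4| ≤ 1 := by
    rw [abs_le]; constructor
    · nlinarith [sq_nonneg (2 * s ^ 2 - 1)]
    · nlinarith
  have b2 : |s - 2 * s ^ 3| ≤ 1 := by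
    rw [abs_le]; constructor
    · nlinarith [mul_nonneg hsin.le (sub_nonneg.2 s2)]
    · nlinarith [mul_pos hsin s20]
  have d1 : |c - 0.81| ≤ 0.0006 := by rw [abs_le]; constructor <;> linarith
  have d2 : |u - 1.2732| ≤ 0.0001 := by rw [abs_le]; constructor <;> linarith
  have m1 : |(c - 0.81) * (1 - 8 * s ^ 2 + 8 * s ^ 4)| ≤ 0.0006 * 1 := by
    rw [abs_mul]; exact mul_le_mul d1 b1 (abs_nonneg _) (by norm_num)
  have m2 : |(u - 1.2732) * (s - 2 * s ^ 3)| ≤ 0.0001 * 1 := by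
    rw [abs_mul]; exact mul_le_mul d2 b2 (abs_nonneg _) (by norm_num)
  have m1' := (abs_le.1 m1).1
  have m2' := (abs_le.1 m2).2
  nlinarith

noncomputable def auxP (k i : ℕ) : ℝ :=
  if i ≤ k then -((((k - i : ℕ) : ℝ) + 1 / 2) * Real.pi / ((k : ℝ) + 1))
  else ((((i - k : ℕ) : ℝ) + 1 / 2) * Real.pi / ((k : ℝ) - 1))

theorem auxP_main (k : ℕ) (hk : 5 < k) (i : ℕ) (hi : i < 2 * k - 1) :
    auxP k i ∈ Set.Ioo (-Real.pi) Real.pi ∧ 0.03 < (-1) ^ (k + i) * qfun k (auxP k i) := by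
  have hpi := Real.pi_pos
  have hkr : (5 : ℝ) < k := by exact_mod_cast hk
  unfold auxP
  split_ifs with h
  · obtain ⟨j, rfl⟩ := Nat.exists_eq_add_of_le h
    have hj : i + j - i = j := by omega
    rw [hj]
    have hjr : (j : ℝ) ≤ ((i + j : ℕ) : ℝ) := by exact_mod_cast (by omega)
    have ht0 : 0 < ((j : ℝ) + 1 / 2) * Real.pi / (((i + j : ℕ) : ℝ) + 1) := by positivity
    have ht1 : ((j : ℝ) + 1 / 2) * Real.pi / (((i + j : ℕ) : ℝ) + 1) < Real.pi := by
      rw [div_lt_iff₀ (by positivity)]; nlinarith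
    refine ⟨⟨by linarith, by linarith⟩, ?_⟩
    have hsgn : (-1 : ℝ) ^ (i + j + i) = (-1) ^ j := by
      rw [show i + j + i = j + (i + i) by ring, pow_add, pow_add _ i i, aux_sq, mul_one]
    rw [hsgn]
    exact aux_neg _ hk j _ ht0 ht1 (by field_simp)
  · obtain ⟨j, rfl⟩ := Nat.exists_eq_add_of_le (not_le.1 h).le
    have hj : k + j - k = j := by omega
    rw [hj]
    have hjr : (j : ℝ) + 2 ≤ (k : ℝ) := by exact_mod_cast (by omega)
    have ht0 : 0 < ((j : ℝ) + 1 / 2) * Real.pi / ((k : ℝ) - 1) :=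
      div_pos (by positivity) (by linarith)
    have ht1 : ((j : ℝ) + 1 / 2) * Real.pi / ((k : ℝ) - 1) < Real.pi := by
      rw [div_lt_iff₀ (by linarith)]; nlinarith
    refine ⟨⟨by linarith, by linarith⟩, ?_⟩
    have hsgn : (-1 : ℝ) ^ (k + (k + j)) = (-1) ^ j := by
      rw [← add_assoc, pow_add, pow_add _ k k, aux_sq, one_mul]
    rw [hsgn]
    have : (k : ℝ) - 1 ≠ 0 := by linarith
    exact aux_pos _ hk j _ ht0 ht1 (by field_simp)

theorem auxP_lt (k : ℕ) (hk : 5 < k) (i : ℕ) : auxP k i < auxP k (i + 1) := by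
  have hpi := Real.pi_pos
  have hkr : (5 : ℝ) < k := by exact_mod_cast hk
  have hk1 : 0 < (k : ℝ) - 1 := by linarith
  unfold auxP
  split_ifs with h h' h'
  · have : ((k - (i + 1) : ℕ) : ℝ) < ((k - i : ℕ) : ℝ) := by exact_mod_cast (by omega)
    apply neg_lt_neg
    gcongr
  · refine lt_trans (neg_neg_of_pos (by positivity)) (div_pos (by positivity) hk1)
  · omega
  · have : ((i - k : ℕ) : ℝ) < ((i + 1 - k : ℕ) : ℝ) := by exact_mod_cast (by omega)
    gcongr

/-- For `k > 5`, `q_k` is an alternating function of order `2k−2` on `(−π, π)`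
with oscillation distance `0.03`. -/
theorem qfun_alternating (k : ℕ) (hk : 5 < k) :
    ∃ p : Fin (2 * k - 2 + 1) → ℝ, StrictMono p ∧
      (∀ i, p i ∈ Set.Ioo (-Real.pi) Real.pi) ∧
      (∀ i, (0.03 : ℝ) < |qfun k (p i)|) ∧
      (∀ i : Fin (2 * k - 2), qfun k (p i.castSucc) * qfun k (p i.succ) < 0) := by
  refine ⟨fun i => auxP k i, ?_, ?_, ?_, ?_⟩
  · intro a b hab
    exact strictMono_nat_of_lt_succ (auxP_lt k hk) hab
  · intro i
    exact (auxP_main k hk i (by omega)).1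
  · intro i
    have h := (auxP_main k hk i (by omega)).2
    have h2 := h.trans_le (le_abs_self _)
    rwa [abs_mul, abs_pow, abs_neg, abs_one, one_pow, one_mul] at h2
  · intro i
    have h1 := (auxP_main k hk i (by omega)).2
    have h2 := (auxP_main k hk (i + 1) (by omega)).2
    simp only [Fin.val_castSucc, Fin.val_succ]
    rw [← add_assoc, pow_succ] at h2
    have hj := aux_sq (k + i)
    generalize (-1 : ℝ) ^ (k + (i : ℕ)) = ε at *
    have h3 : 0 < (ε * qfun k (auxP k i)) * (ε * -1 * qfun k (auxP k (i + 1))) :=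
      mul_pos (by linarith) (by linarith)
    have h4 : (ε * qfun k (auxP k i)) * (ε * -1 * qfun k (auxP k (i + 1)))
      = -(qfun k (auxP k i) * qfun k (auxP k (i + 1))) := by
      linear_combination (-(qfun k (auxP k i) * qfun k (auxP k (i + 1)))) * hj
    linarith
end

section
/- For every integer k ≥ 2, the inequality (1/2)(2k−1)(1−2^{−2k}) ζ(2k) < k (1−2^{3−2k}) ζ(2k−2) holds. -/
/-- `zetaVal m = ∑_{n=1}^∞ n^{−m}`, the value of the Riemann zeta function
at the integer `m`. -/
noncomputable def zetaVal (m : ℕ) : ℝ := ∑' n : ℕ, 1 / ((n : ℝ) + 1) ^ m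

lemma zaux_summable (m : ℕ) (hm : 2 ≤ m) : Summable (fun n : ℕ => 1 / ((n : ℝ) + 1) ^ m) := by
  have h := (Real.summable_one_div_nat_pow (p := m)).2 (by omega)
  have := (summable_nat_add_iff 1).2 h
  simpa using this

lemma zaux_shift (m : ℕ) (hm : m ≠ 0) (a : ℝ)
    (h : HasSum (fun n : ℕ => (1 : ℝ) / (n : ℝ) ^ m) a) : zetaVal m = a := by
  have h2 := (hasSum_nat_add_iff' 1).2 h
  simp [hm] at h2
  unfold zetaVal
  simpa using h2.tsum_eq

lemma zaux_two : zetaVal 2 = Real.pi ^ 2 / 6 := zaux_shift 2 (by norm_num) _ hasSum_zeta_two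

lemma zaux_four : zetaVal 4 = Real.pi ^ 4 / 90 := zaux_shift 4 (by norm_num) _ hasSum_zeta_four

lemma zaux_lower (m : ℕ) (hm : 2 ≤ m) : 1 + 1 / (2 : ℝ) ^ m ≤ zetaVal m := by
  have := (zaux_summable m hm).sum_le_tsum (Finset.range 2) (fun i _ => by positivity)
  unfold zetaVal
  refine le_trans (le_of_eq ?_) this
  simp [Finset.sum_range_succ]
  norm_num

lemma zaux_split (m : ℕ) (hm : 2 ≤ m) :
    zetaVal m = 1 + ∑' n : ℕ, 1 / ((n : ℝ) + 2) ^ m := by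
  unfold zetaVal
  rw [(zaux_summable m hm).tsum_eq_zero_add]
  simp [add_assoc]
  norm_num

lemma zaux_summable2 (m : ℕ) (hm : 2 ≤ m) : Summable (fun n : ℕ => 1 / ((n : ℝ) + 2) ^ m) := by
  have h := (summable_nat_add_iff 1).2 (zaux_summable m hm)
  refine h.congr (fun n => ?_)
  push_cast
  ring

lemma zaux_upper (j : ℕ) : zetaVal (j + 4) ≤ 1 + (zetaVal 4 - 1) * (1 / (2 : ℝ) ^ j) := by
  rw [zaux_split (j + 4) (by omega), zaux_split 4 (by norm_num), add_sub_cancel_left,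
    ← tsum_mul_right]
  refine add_le_add le_rfl ?_
  refine Summable.tsum_le_tsum (fun n => ?_) (zaux_summable2 (j + 4) (by omega))
    ((zaux_summable2 4 (by norm_num)).mul_right _)
  rw [one_div_mul_one_div, pow_add, mul_comm (((n : ℝ) + 2) ^ j)]
  gcongr
  simp

theorem zeta_inequality (k : ℕ) (hk : 2 ≤ k) :
    1 / 2 * (2 * (k : ℝ) - 1) * (1 - (2 : ℝ) ^ (-(2 * (k : ℤ)))) * zetaVal (2 * k)
      < (k : ℝ) * (1 - (2 : ℝ) ^ (3 - 2 * (k : ℤ))) * zetaVal (2 * k - 2) := by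
  have hp := Real.pi_lt_d2
  have hp0 := Real.pi_gt_three
  have hp2 : Real.pi ^ 2 < 9.9225 := by nlinarith
  rcases Nat.lt_or_ge k 3 with h3 | h3
  · obtain rfl : k = 2 := by omega
    norm_num [zaux_two, zaux_four]
    nlinarith
  · obtain ⟨i, rfl⟩ := Nat.exists_eq_add_of_le h3
    have hU := zaux_upper (2 * i + 2)
    have hL := zaux_lower (2 * i + 4) (by omega)
    have e1 : 2 * (3 + i) = 2 * i + 2 + 4 := by ring
    have e2 : 2 * i + 2 + 4 - 2 = 2 * i + 4 := by omega
    have z4 : zetaVal 4 ≤ 1.1 := by rw [zaux_four]; nlinarith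
    have x1 : (2 : ℝ) ^ (-(2 * ((3 + i : ℕ) : ℤ))) = 1 / 64 * (1 / 4) ^ i := by
      rw [zpow_neg, show (2 * ((3 + i : ℕ) : ℤ)) = ((2 * (3 + i) : ℕ) : ℤ) by push_cast; ring,
        zpow_natCast, pow_mul, pow_add, mul_inv, one_div_pow]
      norm_num
    have x2 : (2 : ℝ) ^ (3 - 2 * ((3 + i : ℕ) : ℤ)) = 8 * (1 / 64 * (1 / 4) ^ i) := by
      rw [← x1, sub_eq_add_neg, zpow_add₀ (by norm_num)]
      norm_num
    have x3 : 1 / (2 : ℝ) ^ (2 * i + 2) = 16 * (1 / 64 * (1 / 4) ^ i) := by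
      rw [one_div_pow, pow_add, pow_mul]; norm_num; ring
    have x4 : 1 / (2 : ℝ) ^ (2 * i + 4) = 4 * (1 / 64 * (1 / 4) ^ i) := by
      rw [one_div_pow, pow_add, pow_mul]; norm_num; ring
    have hy : ((3 + i : ℕ) : ℝ) * (1 / 64 * (1 / 4) ^ i) ≤ 3 / 64 := by
      clear * -
      induction i with
      | zero => norm_num
      | succ n ih =>
        have : (0 : ℝ) ≤ (1 / 4) ^ n := by positivity
        have : (0 : ℝ) ≤ n * (1 / 4) ^ n := by positivity
        push_cast at *
        rw [pow_succ]
        nlinarith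
    have hx0 : (0 : ℝ) < 1 / 64 * (1 / 4) ^ i := by positivity
    have hK : (3 : ℝ) ≤ ((3 + i : ℕ) : ℝ) := by push_cast; linarith [Nat.cast_nonneg (α := ℝ) i]
    rw [e1, e2, x1, x2]
    rw [x3] at hU
    rw [x4] at hL
    generalize ((3 + i : ℕ) : ℝ) = K at *
    generalize (1 / 64 * (1 / 4) ^ i : ℝ) = x at *
    have hx1 : x ≤ 1 / 64 := by nlinarith
    have hU' : zetaVal (2 * i + 2 + 4) ≤ 1 + 1.6 * x := by nlinarith
    calc 1 / 2 * (2 * K - 1) * (1 - x) * zetaVal (2 * i + 2 + 4)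
        ≤ 1 / 2 * (2 * K - 1) * (1 - x) * (1 + 1.6 * x) := by
          apply mul_le_mul_of_nonneg_left hU'
          apply mul_nonneg <;> linarith
      _ = (K - 1 / 2) * ((1 - x) * (1 + 1.6 * x)) := by ring
      _ ≤ (K - 1 / 2) * (1 + 0.6 * x) := by
          apply mul_le_mul_of_nonneg_left _ (by linarith)
          nlinarith
      _ < K * (1 - 4.5 * x) := by nlinarith
      _ ≤ K * ((1 - 8 * x) * (1 + 4 * x)) := by
          apply mul_le_mul_of_nonneg_left _ (by linarith)
          nlinarith
      _ = K * (1 - 8 * x) * (1 + 4 * x) := by ring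
      _ ≤ _ := by
          apply mul_le_mul_of_nonneg_left hL
          apply mul_nonneg <;> linarith
end

section
/- Let k ≥ 1 be an integer, set A_j = C(2k,2j) E_{2j} E_{2k−2j} for 0 ≤ j ≤ k, and set c = π/(4(1+3^{−1−2k})). Then ∑_{j=0}^{k} |c·A_j − A_k| < |A_k|. (This is Schinzel's sufficient condition, in strict form, for the polynomial ∑_{j=0}^{k} A_j z^j to have all of its zeros on the unit circle and simple.) -/
/-- Auxiliary: `eulerEvenAux m` is the Euler number `E_{2m}`, defined via the
recurrence `∑_{j=0}^{n} C(2n,2j) E_{2j} = 0` for `n ≥ 1`, with `E_0 = 1`. -/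
def eulerEvenAux : ℕ → ℚ
  | 0 => 1
  | m + 1 => -∑ j ∈ (Finset.range (m + 1)).attach,
      ((Nat.choose (2 * (m + 1)) (2 * (j : ℕ))) : ℚ) * eulerEvenAux j
decreasing_by exact Finset.mem_range.mp j.2

/-- The Euler numbers: `E_0 = 1`, `E_n = 0` for odd `n`, and
`∑_{j=0}^{n} C(2n,2j) E_{2j} = 0` for every `n ≥ 1`. -/
def eulerE (n : ℕ) : ℚ := if n % 2 = 1 then 0 else eulerEvenAux (n / 2)

open PowerSeries in
theorem aux_even_sum (g : ℕ → ℚ) (hg : ∀ i, i % 2 = 1 → g i = 0) (m : ℕ) :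
    ∑ i ∈ Finset.range (2 * m + 1), g i = ∑ i ∈ Finset.range (m + 1), g (2 * i) := by
  induction m with
  | zero => simp
  | succ m ih =>
    rw [show 2 * (m + 1) + 1 = 2 * m + 1 + 1 + 1 by ring, Finset.sum_range_succ,
      Finset.sum_range_succ, ih, Finset.sum_range_succ _ (m + 1), hg (2 * m + 1) (by omega)]
    simp [show 2 * m + 1 + 1 = 2 * (m + 1) by ring]

theorem aux_rec (m : ℕ) (hm : 1 ≤ m) :
    ∑ j ∈ Finset.range (m + 1), ((Nat.choose (2 * m) (2 * j)) : ℚ) * eulerEvenAux j = 0 := by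
  obtain ⟨n, rfl⟩ : ∃ n, m = n + 1 := ⟨m - 1, by omega⟩
  rw [Finset.sum_range_succ, eulerEvenAux,
    Finset.sum_attach (Finset.range (n + 1))
      (fun j => ((Nat.choose (2 * (n + 1)) (2 * j)) : ℚ) * eulerEvenAux j)]
  simp

theorem aux_even (m : ℕ) : eulerE (2 * m) = eulerEvenAux m := by
  simp [eulerE]

theorem aux_odd (m : ℕ) (h : m % 2 = 1) : eulerE m = 0 := by
  simp [eulerE, h]

open PowerSeries in
theorem aux_S : (PowerSeries.mk fun n => eulerE n / (n.factorial : ℚ)) *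
    (PowerSeries.exp ℚ + PowerSeries.rescale (-1) (PowerSeries.exp ℚ)) = 2 := by
  have h2 : (2 : PowerSeries ℚ) = PowerSeries.C 2 := (map_ofNat PowerSeries.C 2).symm
  ext n
  rw [h2, PowerSeries.coeff_C, PowerSeries.coeff_mul,
    Finset.Nat.sum_antidiagonal_eq_sum_range_succ_mk]
  simp only [coeff_mk, map_add, coeff_rescale, coeff_exp, Algebra.algebraMap_self, RingHom.id_apply]
  rcases Nat.even_or_odd' n with ⟨m, rfl | rfl⟩
  · rw [aux_even_sum _ (fun i hi => by rw [aux_odd i hi]; simp)]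
    rcases Nat.eq_zero_or_pos m with rfl | hm
    · simp [eulerE, eulerEvenAux]; norm_num
    · rw [if_neg (by omega)]
      have h := aux_rec m hm
      have : ∀ j ∈ Finset.range (m + 1), eulerE (2 * j) / ((2 * j).factorial : ℚ) *
          (1 / ((2 * m - 2 * j).factorial : ℚ) + (-1) ^ (2 * m - 2 * j) *
            (1 / ((2 * m - 2 * j).factorial : ℚ))) =
          (2 / ((2 * m).factorial : ℚ)) *
            (((Nat.choose (2 * m) (2 * j)) : ℚ) * eulerEvenAux j) := by
        intro j hj
        have hj' : j ≤ m := by simpa [Nat.lt_succ_iff] using hj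
        rw [aux_even, Nat.cast_choose ℚ (show 2 * j ≤ 2 * m by omega),
          show 2 * m - 2 * j = 2 * (m - j) by omega, pow_mul]
        have h1 : ((2 * m).factorial : ℚ) ≠ 0 := by positivity
        have h2 : ((2 * j).factorial : ℚ) ≠ 0 := by positivity
        have h3 : ((2 * (m - j)).factorial : ℚ) ≠ 0 := by positivity
        norm_num
        field_simp
        norm_num
      rw [Finset.sum_congr rfl this, ← Finset.mul_sum, h, mul_zero]
  · rw [if_neg (by omega)]
    apply Finset.sum_eq_zero
    intro i hi
    have hi' : i ≤ 2 * m + 1 := by simpa [Nat.lt_succ_iff] using hi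
    rcases Nat.mod_two_eq_zero_or_one i with h | h
    · have : Odd (2 * m + 1 - i) := by rw [Nat.odd_iff]; omega
      rw [this.neg_one_pow]; ring
    · rw [aux_odd i h]; simp

open PowerSeries in
theorem aux_bern (k : ℕ) :
    (Polynomial.bernoulli (2 * k + 1)).eval (1 / 4 : ℚ) / ((2 * k + 1).factorial : ℚ) =
      - (1 / 4) * (eulerE (2 * k) / ((2 * k).factorial : ℚ)) / 16 ^ k := by
  set B : PowerSeries ℚ := (PowerSeries.mk fun n =>
    Polynomial.aeval (1 / 4 : ℚ) ((1 / (n.factorial : ℚ)) • Polynomial.bernoulli n)) with hB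
  set S : PowerSeries ℚ := (PowerSeries.mk fun n => eulerE n / (n.factorial : ℚ)) with hS
  set u : PowerSeries ℚ := rescale (1 / 4) (PowerSeries.exp ℚ) with hu
  set v : PowerSeries ℚ := rescale (-(1 / 4)) (PowerSeries.exp ℚ) with hv
  have hg : B * (PowerSeries.exp ℚ - 1) = X * u := Polynomial.bernoulli_generating_function (1 / 4 : ℚ)
  have huv : u * v = 1 := by
    have := PowerSeries.exp_mul_exp_eq_exp_add (A := ℚ) (1 / 4) (-(1 / 4))
    rw [hu, hv, this]; simp
  have hu2 : rescale (1 / 2) (PowerSeries.exp ℚ) = u * u := by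
    rw [hu, PowerSeries.exp_mul_exp_eq_exp_add]; norm_num
  have hu4 : PowerSeries.exp ℚ = u * u * (u * u) := by
    rw [← hu2, PowerSeries.exp_mul_exp_eq_exp_add]; norm_num
  have hnu : rescale (-1 : ℚ) u = v := by
    rw [hu, hv, rescale_rescale]; norm_num
  have hg' : rescale (-1 : ℚ) B * (v * v * (v * v) - 1) = - X * v := by
    have := congrArg (rescale (-1 : ℚ)) hg
    rw [hu4] at this
    simpa only [map_mul, map_sub, map_one, hnu, rescale_X, map_neg, neg_mul, one_mul] using this
  have hSS : rescale (1 / 4 : ℚ) S * (u + v) = 2 := by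
    have := congrArg (rescale (1 / 4 : ℚ)) aux_S
    rw [map_mul, map_add, rescale_rescale, map_ofNat] at this
    simpa [hu, hv, hS] using this
  set D := B - rescale (-1 : ℚ) B with hD
  have hne : u * u - 1 ≠ 0 := by
    intro h
    have := congrArg (coeff 1) h
    rw [← hu2] at this
    simp [coeff_rescale, coeff_exp, coeff_one] at this
  have h1 : (u * u - 1) * (D * (u + v)) = (u * u - 1) * (- X) := by
    rw [hu4] at hg
    have e : rescale (-1 : ℚ) B * (u ^ 4 - 1) = X * u ^ 3 := by
      linear_combination (-u ^ 4) * hg' + (rescale (-1 : ℚ) B * (u^3*v^3 + u^2*v^2+u*v+1) + u ^ 3 * X) * huv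
    have e2 : D * (u ^ 4 - 1) = X * (u - u ^ 3) := by
      rw [hD]; linear_combination hg - e
    linear_combination v * e2 + (D * u * (u ^ 2 - 1) * (-1) + X * (1-u^2)) * huv
  have h2 := mul_left_cancel₀ hne h1
  have h3 : 2 * D = - X * rescale (1 / 4 : ℚ) S := by
    linear_combination (rescale (1 / 4 : ℚ) S) * h2 - D * hSS
  have h4 := congrArg (coeff (2 * k + 1)) h3
  have e2 : (2 : PowerSeries ℚ) = PowerSeries.C 2 := (map_ofNat PowerSeries.C 2).symm
  rw [e2, coeff_C_mul, neg_mul, map_neg, mul_comm X, coeff_succ_mul_X, hD, map_sub, coeff_rescale,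
    coeff_rescale, hB, hS, coeff_mk, coeff_mk, Odd.neg_one_pow ⟨k, rfl⟩, pow_mul] at h4
  simp only [map_smul, Polynomial.coe_aeval_eq_eval, smul_eq_mul] at h4
  have e16 : ((1 / 4 : ℚ) ^ 2) ^ k = 1 / 16 ^ k := by
    rw [← one_div_pow]; norm_num
  rw [e16] at h4
  linear_combination h4 / 4

noncomputable def auxb (k : ℕ) : ℝ :=
  (-1) ^ k * ((eulerE (2 * k) : ℝ) / ((2 * k).factorial : ℝ)) * (Real.pi / 2) ^ (2 * k + 1) / 2

theorem aux_hasSum (k : ℕ) (hk : 1 ≤ k) :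
    HasSum (fun m : ℕ => (-1 : ℝ) ^ m * (1 / (2 * (m : ℝ) + 1) ^ (2 * k + 1))) (auxb k) := by
  have h := hasSum_one_div_nat_pow_mul_sin (k := k) (by omega) (x := 1 / 4) (by norm_num)
  have hinj : Function.Injective (fun m : ℕ => 2 * m + 1) := fun a b h => by
    simp only at h; omega
  rw [← hinj.hasSum_iff] at h
  · have e := aux_bern k
    have e' : (Polynomial.eval (1 / 4 : ℝ) (Polynomial.map (algebraMap ℚ ℝ)
        (Polynomial.bernoulli (2 * k + 1)))) =
        (((Polynomial.bernoulli (2 * k + 1)).eval (1 / 4 : ℚ) : ℚ) : ℝ) := by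
      rw [Polynomial.eval_map_algebraMap]
      have := Polynomial.aeval_algebraMap_apply ℝ (1 / 4 : ℚ) (Polynomial.bernoulli (2 * k + 1))
      simpa using this
    convert h using 1
    · funext m
      simp only [Function.comp]
      have : Real.sin (2 * Real.pi * ((2 * m + 1 : ℕ) : ℝ) * (1 / 4)) = (-1) ^ m := by
        rw [show 2 * Real.pi * ((2 * m + 1 : ℕ) : ℝ) * (1 / 4) = Real.pi / 2 + m * Real.pi by
          push_cast; ring, Real.sin_add_nat_mul_pi]
        simp
      rw [this]; push_cast; ring
    · rw [e']
      have e3 : (((Polynomial.bernoulli (2 * k + 1)).eval (1 / 4 : ℚ) : ℚ) : ℝ) /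
          ((2 * k + 1).factorial : ℝ) =
          - (1 / 4) * ((eulerE (2 * k) : ℝ) / ((2 * k).factorial : ℝ)) / 16 ^ k := by
        have e4 := congrArg (fun q : ℚ => (q : ℝ)) e
        simp only [Rat.cast_div, Rat.cast_mul, Rat.cast_neg, Rat.cast_pow, Rat.cast_natCast,
          Rat.cast_one, Rat.cast_ofNat] at e4
        exact e4
      rw [div_mul_eq_mul_div, mul_div_assoc, e3, auxb]
      have : (2 * Real.pi) ^ (2 * k + 1) = (Real.pi / 2) ^ (2 * k + 1) * (4 * 16 ^ k) := by
        rw [show 2 * Real.pi = (Real.pi / 2) * 4 by ring, mul_pow _ 4, pow_succ 4, pow_mul 4]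
        norm_num; ring
      rw [this]
      field_simp
      ring
  · intro n hn
    have : n % 2 = 0 := by
      by_contra hc
      exact hn ⟨n / 2, by simp only; omega⟩
    obtain ⟨m, rfl⟩ : ∃ m, n = 2 * m := ⟨n / 2, by omega⟩
    rw [show 2 * Real.pi * ((2 * m : ℕ) : ℝ) * (1 / 4) = m * Real.pi by push_cast; ring,
      Real.sin_nat_mul_pi, mul_zero]

theorem aux_bounds (k : ℕ) (hk : 1 ≤ k) :
    1 - (1 / 3 : ℝ) ^ (2 * k + 1) ≤ auxb k ∧
      auxb k ≤ 1 - (1 / 3 : ℝ) ^ (2 * k + 1) + (1 / 5) ^ (2 * k + 1) := by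
  have h := (aux_hasSum k hk).tendsto_sum_nat
  have ha : Antitone (fun m : ℕ => (1 / (2 * (m : ℝ) + 1) ^ (2 * k + 1))) := by
    intro a b hab
    simp only
    have : (a : ℝ) ≤ b := by exact_mod_cast hab
    gcongr
  have h1 := ha.alternating_series_le_tendsto h 1
  have h2 := ha.tendsto_le_alternating_series h 1
  norm_num [Finset.sum_range_succ] at h1 h2
  constructor
  · simp only [one_div, inv_pow]; linarith
  · simp only [one_div, inv_pow]; linarith

theorem aux_geom (n : ℕ) : ∑ j ∈ Finset.range n, (1 / 3 : ℝ) ^ (2 * (j + 1) + 1) ≤ 1 / 24 := by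
  have : ∑ j ∈ Finset.range n, (1 / 3 : ℝ) ^ (2 * (j + 1) + 1) = 1 / 24 - (1 / 24) * (1 / 9) ^ n := by
    induction n with
    | zero => simp
    | succ n ih =>
      rw [Finset.sum_range_succ, ih, pow_succ (1 / 3 : ℝ), pow_mul, pow_succ, pow_succ]
      norm_num; ring
  rw [this]
  have : (0 : ℝ) ≤ (1 / 24) * (1 / 9) ^ n := by positivity
  linarith

theorem aux_pow (n : ℕ) : (1 / 9 : ℝ) ^ (n + 1) + (1 / 5) ^ (n + 1) ≤ (1 / 3) ^ (n + 1) := by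
  induction n with
  | zero => norm_num
  | succ n ih =>
    rw [pow_succ _ (n + 1), pow_succ _ (n + 1), pow_succ _ (n + 1)]
    have : (0 : ℝ) < (1 / 9) ^ (n + 1) := by positivity
    have : (0 : ℝ) < (1 / 5) ^ (n + 1) := by positivity
    linarith

theorem aux_b0 : auxb 0 = Real.pi / 4 := by
  simp [auxb, eulerE, eulerEvenAux]; ring

theorem aux_third (k : ℕ) (hk : 1 ≤ k) : (1 / 3 : ℝ) ^ (2 * k + 1) ≤ 1 / 27 := by
  calc (1 / 3 : ℝ) ^ (2 * k + 1) ≤ (1 / 3) ^ 3 :=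
        pow_le_pow_of_le_one (by norm_num) (by norm_num) (by omega)
    _ = 1 / 27 := by norm_num

theorem aux_le_one (k : ℕ) : 0 ≤ auxb k ∧ auxb k ≤ 1 := by
  rcases Nat.eq_zero_or_pos k with rfl | hk
  · rw [aux_b0]; constructor
    · positivity
    · linarith [Real.pi_lt_four]
  · obtain ⟨h1, h2⟩ := aux_bounds k hk
    have h3 := aux_third k hk
    have h4 := aux_pow (2 * k)
    have : (0 : ℝ) < (1 / 9) ^ (2 * k + 1) := by positivity
    constructor <;> linarith

theorem aux_term (k j : ℕ) (hk : 1 ≤ k) (hj : j ≤ k) :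
    auxb j * auxb (k - j) ≤ auxb k * (1 + (1 / 3 : ℝ) ^ (2 * k + 1)) := by
  have hx : (0 : ℝ) < (1 / 3 : ℝ) ^ (2 * k + 1) := by positivity
  obtain ⟨h1, h2⟩ := aux_bounds k hk
  have hkk := aux_le_one k
  have hp := Real.pi_lt_four
  have hp0 := Real.pi_pos
  rcases Nat.eq_zero_or_pos j with rfl | hj0
  · rw [aux_b0, Nat.sub_zero]; nlinarith
  · have e1 := aux_le_one j
    have e2 := aux_le_one (k - j)
    obtain ⟨h3, h4⟩ := aux_bounds j hj0
    have h5 := aux_pow (2 * j)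
    have h6 : (1 / 9 : ℝ) ^ (2 * k + 1) ≤ (1 / 9) ^ (2 * j + 1) :=
      pow_le_pow_of_le_one (by norm_num) (by norm_num) (by omega)
    have h7 : (1 / 9 : ℝ) ^ (2 * k + 1) = (1 / 3) ^ (2 * k + 1) * (1 / 3) ^ (2 * k + 1) := by
      rw [← mul_pow]; norm_num
    have h8 : auxb j * auxb (k - j) ≤ auxb j := by nlinarith
    nlinarith

theorem aux_sum_s13 (k : ℕ) (hk : 1 ≤ k) :
    k * (auxb k * (1 + (1 / 3 : ℝ) ^ (2 * k + 1))) <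
      ∑ j ∈ Finset.range (k + 1), auxb j * auxb (k - j) := by
  obtain ⟨n, rfl⟩ : ∃ n, k = n + 1 := ⟨k - 1, by omega⟩
  rw [Finset.sum_range_succ, Finset.sum_range_succ']
  have hm : (n : ℝ) - 1 / 12 ≤ ∑ j ∈ Finset.range n, auxb (j + 1) * auxb (n + 1 - (j + 1)) := by
    have h1 : ∀ j ∈ Finset.range n, 1 - (1 / 3 : ℝ) ^ (2 * (j + 1) + 1)
        - (1 / 3 : ℝ) ^ (2 * (n - 1 - j + 1) + 1) ≤ auxb (j + 1) * auxb (n + 1 - (j + 1)) := by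
      intro j hj
      have hj' := Finset.mem_range.mp hj
      rw [show n + 1 - (j + 1) = n - 1 - j + 1 by omega]
      have a1 := (aux_bounds (j + 1) (by omega)).1
      have a2 := (aux_bounds (n - 1 - j + 1) (by omega)).1
      have a3 := (aux_le_one (j + 1)).2
      have a4 := (aux_le_one (n - 1 - j + 1)).2
      nlinarith
    have h2 := Finset.sum_le_sum h1
    rw [Finset.sum_sub_distrib, Finset.sum_sub_distrib,
      Finset.sum_range_reflect (fun i => (1 / 3 : ℝ) ^ (2 * (i + 1) + 1)) n] at h2
    have h3 := aux_geom n
    simp only [Finset.sum_const, Finset.card_range, nsmul_eq_mul, mul_one] at h2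
    linarith
  obtain ⟨h1, h2⟩ := aux_bounds (n + 1) hk
  have h3 := aux_third (n + 1) hk
  have hx : (0 : ℝ) < (1 / 3 : ℝ) ^ (2 * (n + 1) + 1) := by positivity
  have hy : (0 : ℝ) < (1 / 5 : ℝ) ^ (2 * (n + 1) + 1) := by positivity
  have hyk : ((n + 1 : ℕ) : ℝ) * (1 / 5 : ℝ) ^ (2 * (n + 1) + 1) ≤ 1 / 125 := by
    clear * -
    induction n with
    | zero => norm_num
    | succ n ih =>
      have hy : (0 : ℝ) < (1 / 5 : ℝ) ^ (2 * (n + 1) + 1) := by positivity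
      rw [show 2 * (n + 1 + 1) + 1 = 2 * (n + 1) + 1 + 2 by ring, pow_add]
      push_cast at ih ⊢
      have : (0:ℝ) ≤ n := by positivity
      nlinarith [mul_nonneg this hy.le]
  simp only [Nat.sub_zero, Nat.sub_self, aux_b0]
  have hp := Real.pi_gt_three
  set x := (1 / 3 : ℝ) ^ (2 * (n + 1) + 1)
  set y := (1 / 5 : ℝ) ^ (2 * (n + 1) + 1)
  set b := auxb (n + 1)
  have hq : b * (1 + x) ≤ 1 + 2 * y := by nlinarith
  have hN : (0 : ℝ) ≤ ((n + 1 : ℕ) : ℝ) := by positivity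
  have hq2 := mul_le_mul_of_nonneg_left hq hN
  have hb : 3 / 4 * (26 / 27) ≤ Real.pi / 4 * b := by
    apply mul_le_mul <;> linarith
  push_cast at *
  nlinarith

/-- Schinzel's condition (strict form) holds for the coefficients
`A_j = C(2k,2j) E_{2j} E_{2k−2j}` of `S_k(z)`, with `c = π/(4(1+3^{−1−2k}))`. -/
theorem schinzel_condition_for_S (k : ℕ) (hk : 1 ≤ k)
    (A : ℕ → ℝ)
    (hA : ∀ j, A j = ((Nat.choose (2 * k) (2 * j)) : ℝ) * (eulerE (2 * j) : ℝ)
      * (eulerE (2 * k - 2 * j) : ℝ))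
    (c : ℝ) (hc : c = Real.pi / (4 * (1 + (3 : ℝ) ^ (-1 - 2 * (k : ℤ))))) :
    ∑ j ∈ Finset.range (k + 1), |c * A j - A k| < |A k| := by
  have hpi := Real.pi_pos
  have hx3 : (3 : ℝ) ^ (-1 - 2 * (k : ℤ)) = (1 / 3 : ℝ) ^ (2 * k + 1) := by
    rw [show (-1 - 2 * (k : ℤ)) = -((2 * k + 1 : ℕ) : ℤ) by push_cast; ring, zpow_neg,
      zpow_natCast, one_div, inv_pow]
  rw [hx3] at hc
  have hx : (0 : ℝ) < (1 / 3 : ℝ) ^ (2 * k + 1) := by positivity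
  have hterm := fun j hj => aux_term k j hk hj
  have hsum := aux_sum_s13 k hk
  set x := (1 / 3 : ℝ) ^ (2 * k + 1)
  set M : ℝ := ((2 * k).factorial : ℝ) * 2 / (Real.pi / 2) ^ (2 * k + 1) with hM
  have hM0 : 0 < M := by positivity
  have hAj : ∀ j, j ≤ k → A j = (-1) ^ k * (M * (4 / Real.pi) * (auxb j * auxb (k - j))) := by
    intro j hj
    obtain ⟨i, rfl⟩ : ∃ i, k = j + i := ⟨k - j, by omega⟩
    rw [hA, Nat.cast_choose ℝ (show 2 * j ≤ 2 * (j + i) by omega),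
      show 2 * (j + i) - 2 * j = 2 * i by omega, show j + i - j = i by omega, hM, auxb, auxb]
    have hs1 : ((-1 : ℝ) ^ j) * (-1) ^ j = 1 := by rw [← mul_pow]; simp
    have hs2 : ((-1 : ℝ) ^ i) * (-1) ^ i = 1 := by rw [← mul_pow]; simp
    have f1 : ((2 * j).factorial : ℝ) ≠ 0 := by positivity
    have f2 : ((2 * i).factorial : ℝ) ≠ 0 := by positivity
    rw [show 2 * (j + i) + 1 = 2 * j + 2 * i + 1 by ring]
    generalize hP : Real.pi / 2 = P
    have hP0 : P ≠ 0 := by rw [← hP]; positivity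
    rw [show Real.pi = 2 * P by rw [← hP]; ring]
    have : (-1 : ℝ) ^ (j + i) * (((2 * (j + i)).factorial : ℝ) * 2 / P ^ (2 * j + 2 * i + 1) *
        (4 / (2 * P)) * ((-1) ^ j * ((eulerE (2 * j) : ℝ) / ((2 * j).factorial : ℝ)) *
        P ^ (2 * j + 1) / 2 * ((-1) ^ i * ((eulerE (2 * i) : ℝ) / ((2 * i).factorial : ℝ)) *
        P ^ (2 * i + 1) / 2))) = (((-1 : ℝ) ^ j) * (-1) ^ j) * (((-1 : ℝ) ^ i) * (-1) ^ i) *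
        (((2 * (j + i)).factorial : ℝ) / (((2 * j).factorial : ℝ) * ((2 * i).factorial : ℝ)) *
        eulerE (2 * j) * eulerE (2 * i)) := by
      rw [pow_add (-1 : ℝ)]
      field_simp
      ring
    rw [this, hs1, hs2]; ring
  have hAk : A k = (-1) ^ k * (M * auxb k) := by
    rw [hAj k le_rfl, Nat.sub_self, aux_b0]; field_simp
  have hbk := (aux_le_one k).1
  have hT : ∀ j ∈ Finset.range (k + 1), |c * A j - A k| =
      M * auxb k - M / (1 + x) * (auxb j * auxb (k - j)) := by
    intro j hj
    have hj' : j ≤ k := by simpa [Nat.lt_succ_iff] using hj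
    rw [show c * A j - A k = (-1) ^ k * (M / (1 + x) * (auxb j * auxb (k - j)) - M * auxb k) by
      rw [hAj j hj', hAk, hc]; field_simp, abs_mul, abs_neg_one_pow, one_mul, abs_of_nonpos]
    · ring
    · have := mul_le_mul_of_nonneg_left (hterm j hj') (show 0 ≤ M / (1 + x) by positivity)
      have e : M / (1 + x) * (auxb k * (1 + x)) = M * auxb k := by field_simp
      linarith
  rw [Finset.sum_congr rfl hT, Finset.sum_sub_distrib, Finset.sum_const,
    ← Finset.mul_sum, hAk, abs_mul,
    abs_neg_one_pow, one_mul, abs_of_nonneg (by positivity)]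
  have := mul_lt_mul_of_pos_left hsum (show 0 < M / (1 + x) by positivity)
  have e : M / (1 + x) * (k * (auxb k * (1 + x))) = k * (M * auxb k) := by field_simp
  simp only [Finset.card_range, nsmul_eq_mul]
  push_cast
  linarith
end
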